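/- (Growth along arithmetic progressions.) Let M be a compact metric space, φ : ℝ × M → M a continuous flow, and μ a φ-invariant Borel probability measure which is the unique φ-invariant Borel probability measure on M. Let f : M → ℝ be continuous and set F_t(x) := ∫₀^t f(φ_τ(x)) dτ. Assume f is not a measurable coboundary for φ, and let C > 1. Then for every ε > 0 and every integer ℓ ≥ 1 there exists t₀ > 0 such that μ{x ∈ M : |F_{i t₀}(x)| < C} < ε for all i = 1, …, ℓ. -/

import Mathlib

open MeasureTheory Filter

/-!
Let the flow act on `X × ℝ` by the skew product `Φ_t (x, s) = (φ_t x, s + F_t x)`, which preserves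
`μ × Lebesgue`. If `Φ_1` had a nonzero fixed vector `h` in `L²`, then `|h|²` would be the density of
a finite `Φ_1`-invariant measure; averaging it over `Φ_s`, `0 < s ≤ 1`, gives a `Φ`-invariant one.
Its marginal on `X` is `μ` by ergodicity, and its conditional measures `κ_x` on the fibres satisfy
`κ_{φ_t x} = κ_x` translated by `F_t x`, so their medians form a transfer function for `F`.

Hence, when `F` is not a coboundary, the mean ergodic theorem for `Φ_1` makes the correlations of
any two sets of finite measure vanish on average. For suitable boxes `X × [a, b]` the correlation at
time `n` dominates `μ {|F_n| < C}`, and a nonnegative sequence with vanishing averages is small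
along some progression `n, 2n, …, ℓn`.
-/

section Selection

open scoped Topology

lemma sum_Icc_mul_le_sum_range {R : Type*} [AddCommMonoid R] [PartialOrder R]
    [IsOrderedAddMonoid R] {a : ℕ → R} (ha : ∀ n, 0 ≤ a n) {i l : ℕ} (hi : 1 ≤ i) (hil : i ≤ l)
    (N : ℕ) :
    ∑ n ∈ Finset.Icc 1 N, a (i * n) ≤ ∑ m ∈ Finset.range (l * N + 1), a m := by
  have hinj : Set.InjOn (i * ·) (Finset.Icc 1 N : Set ℕ) :=
    (mul_right_injective₀ (by lia : i ≠ 0)).injOn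
  rw [← Finset.sum_image (f := a) (by simpa using hinj)]
  refine Finset.sum_le_sum_of_subset_of_nonneg (fun m hm => ?_) fun m _ _ => ha m
  obtain ⟨n, hn, rfl⟩ := Finset.mem_image.1 hm
  exact Finset.mem_range.2 (Nat.lt_succ_of_le (Nat.mul_le_mul hil (Finset.mem_Icc.1 hn).2))

lemma mul_le_mul_sum_range_of_forall_exists_le {a : ℕ → ℝ} (ha : ∀ n, 0 ≤ a n) {ε : ℝ} {l : ℕ}
    (h : ∀ n, 0 < n → ∃ i, 1 ≤ i ∧ i ≤ l ∧ ε ≤ a (i * n)) (N : ℕ) :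
    N * ε ≤ l * ∑ m ∈ Finset.range (l * N + 1), a m := by
  have hblock (n : ℕ) (hn : 0 < n) : ε ≤ ∑ i ∈ Finset.Icc 1 l, a (i * n) := by
    obtain ⟨i, hi, hil, hε⟩ := h n hn
    exact hε.trans (Finset.single_le_sum (f := fun i => a (i * n)) (fun _ _ => ha _)
      (Finset.mem_Icc.2 ⟨hi, hil⟩))
  calc N * ε = ∑ _n ∈ Finset.Icc 1 N, ε := by simp
    _ ≤ ∑ n ∈ Finset.Icc 1 N, ∑ i ∈ Finset.Icc 1 l, a (i * n) :=
        Finset.sum_le_sum fun n hn => hblock n (Finset.mem_Icc.1 hn).1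
    _ = ∑ i ∈ Finset.Icc 1 l, ∑ n ∈ Finset.Icc 1 N, a (i * n) := Finset.sum_comm
    _ ≤ ∑ _i ∈ Finset.Icc 1 l, ∑ m ∈ Finset.range (l * N + 1), a m :=
        Finset.sum_le_sum fun i hi =>
          sum_Icc_mul_le_sum_range ha (Finset.mem_Icc.1 hi).1 (Finset.mem_Icc.1 hi).2 N
    _ = l * ∑ m ∈ Finset.range (l * N + 1), a m := by simp

lemma exists_pos_forall_mul_lt_of_tendsto_average_zero {a : ℕ → ℝ} (ha : ∀ n, 0 ≤ a n)
    (hlim : Tendsto (fun N : ℕ => (N : ℝ)⁻¹ * ∑ n ∈ Finset.range N, a n) atTop (𝓝 0))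
    {ε : ℝ} (hε : 0 < ε) (l : ℕ) :
    ∃ n : ℕ, 0 < n ∧ ∀ i, 1 ≤ i → i ≤ l → a (i * n) < ε := by
  by_contra! hcon
  obtain ⟨i, hi, hil, -⟩ := hcon 1 one_pos
  have hl : 0 < l := by lia
  have hsub : Tendsto (fun N : ℕ => l * N + 1) atTop atTop :=
    tendsto_atTop_mono (fun N => Nat.le_succ_of_le (Nat.le_mul_of_pos_left N hl)) tendsto_id
  have hlower : ∀ᶠ N : ℕ in atTop, ε / (l * (l + 1)) ≤
      ((l * N + 1 : ℕ) : ℝ)⁻¹ * ∑ m ∈ Finset.range (l * N + 1), a m := by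
    filter_upwards [eventually_ge_atTop 1] with N hN
    have hN' : (1 : ℝ) ≤ N := by exact_mod_cast hN
    rw [inv_mul_eq_div, div_le_div_iff₀ (by positivity) (by positivity)]
    push_cast
    calc ε * (l * N + 1) ≤ (N * ε) * (l + 1) := by nlinarith
      _ ≤ (l * ∑ m ∈ Finset.range (l * N + 1), a m) * (l + 1) :=
        mul_le_mul_of_nonneg_right (mul_le_mul_sum_range_of_forall_exists_le ha hcon N)
          (by positivity)
      _ = _ := by ring
  exact (ge_of_tendsto (hlim.comp hsub) hlower).not_gt (by positivity)

end Selection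

section MeanErgodic

open scoped Topology

lemma tendsto_birkhoffAverage_zero_of_forall_fixed_eq_zero {𝕜 E : Type*} [RCLike 𝕜]
    [NormedAddCommGroup E] [InnerProductSpace 𝕜 E] [CompleteSpace E] {U : E →L[𝕜] E}
    (hU : ‖U‖ ≤ 1) (hfix : ∀ h, U h = h → h = 0) (g : E) :
    Tendsto (birkhoffAverage 𝕜 U id · g) atTop (𝓝 0) := by
  have hproj : ((U.eqLocus (1 : E →L[𝕜] E)).orthogonalProjectionOnto g : E) = 0 :=
    hfix _ ((U.eqLocus (1 : E →L[𝕜] E)).orthogonalProjectionOnto g).2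
  exact hproj ▸ U.tendsto_birkhoffAverage_orthogonalProjection hU g

lemma tendsto_average_measureReal_preimage_inter {X : Type*} [MeasurableSpace X] {m : Measure X}
    {T : X → X} (hT : MeasurePreserving T m m)
    (hfix : ∀ h : Lp ℝ 2 m, Lp.compMeasurePreserving T hT h = h → h = 0)
    {A B : Set X} (hA : MeasurableSet A) (hAm : m A ≠ ⊤) (hB : MeasurableSet B) (hBm : m B ≠ ⊤) :
    Tendsto (fun N : ℕ => (N : ℝ)⁻¹ * ∑ n ∈ Finset.range N, m.real (T^[n] ⁻¹' A ∩ B))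
      atTop (𝓝 0) := by
  let V := Lp.compMeasurePreservingₗᵢ (E := ℝ) (p := 2) ℝ T hT
  have hinner (n : ℕ) : inner ℝ (V^[n] (indicatorConstLp 2 hA hAm 1)) (indicatorConstLp 2 hB hBm 1)
      = m.real (T^[n] ⁻¹' A ∩ B) := by
    have hiter : V^[n] (indicatorConstLp 2 hA hAm 1) =
        Lp.compMeasurePreserving T^[n] (hT.iterate n) (indicatorConstLp 2 hA hAm 1) :=
      congrFun (Lp.compMeasurePreserving_iterate hT n) _
    rw [hiter, Lp.indicatorConstLp_compMeasurePreserving]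
    exact L2.real_inner_indicatorConstLp_one_indicatorConstLp_one _ hB _ hBm
  have hlim := (tendsto_birkhoffAverage_zero_of_forall_fixed_eq_zero
    V.norm_toContinuousLinearMap_le hfix (indicatorConstLp 2 hA hAm 1)).inner
      (tendsto_const_nhds (x := indicatorConstLp 2 hB hBm (1 : ℝ))) (𝕜 := ℝ)
  rw [inner_zero_left] at hlim
  refine hlim.congr fun N => ?_
  rw [birkhoffAverage, birkhoffSum, real_inner_smul_left, sum_inner]
  exact congrArg _ (Finset.sum_congr rfl fun n _ => hinner n)

end MeanErgodic

section InvariantDensity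

lemma measurePreserving_withDensity_comp {X Y : Type*} [MeasurableSpace X] [MeasurableSpace Y]
    {m : Measure X} {m' : Measure Y} {T : X → Y} (hT : MeasurePreserving T m m') {d : Y → ENNReal}
    (hd : Measurable d) :
    MeasurePreserving T (m.withDensity (d ∘ T)) (m'.withDensity d) := by
  refine ⟨hT.measurable, Measure.ext fun A hA => ?_⟩
  rw [Measure.map_apply hT.measurable hA, withDensity_apply _ (hT.measurable hA),
    withDensity_apply _ hA]
  exact hT.setLIntegral_comp_preimage hA hd

lemma exists_isProbabilityMeasure_absolutelyContinuous_measurePreserving {X E : Type*}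
    [MeasurableSpace X] [NormedAddCommGroup E] {m : Measure X} {T : X → X}
    (hT : MeasurePreserving T m m) {p : ENNReal} (hp0 : p ≠ 0) (hp : p ≠ ⊤) {h : Lp E p m}
    (hne : h ≠ 0) (hinv : Lp.compMeasurePreserving T hT h = h) :
    ∃ ν : Measure X, IsProbabilityMeasure ν ∧ ν ≪ m ∧ MeasurePreserving T ν ν := by
  let d : X → ENNReal := fun x => ‖h x‖ₑ ^ p.toReal
  have hp' : 0 < p.toReal := ENNReal.toReal_pos hp0 hp
  have hd : Measurable d := (Lp.stronglyMeasurable h).enorm.pow_const _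
  have hdT : d ∘ T =ᵐ[m] d := by
    have hcomp := Lp.coeFn_compMeasurePreserving h hT
    rw [hinv] at hcomp
    filter_upwards [hcomp] with x hx
    exact congrArg (‖·‖ₑ ^ p.toReal) hx.symm
  have : IsFiniteMeasure (m.withDensity d) := isFiniteMeasure_withDensity
    ((eLpNorm_lt_top_iff_lintegral_rpow_enorm_lt_top hp0 hp).1 (Lp.eLpNorm_lt_top h)).ne
  have : NeZero (m.withDensity d) := by
    refine ⟨fun hzero => hne ((Lp.eq_zero_iff_ae_eq_zero).2 ?_)⟩
    filter_upwards [(withDensity_eq_zero_iff hd.aemeasurable).1 hzero] with x hx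
    simpa [d, ENNReal.rpow_eq_zero_iff, hp', hp'.not_gt] using hx
  have hpres : MeasurePreserving T (m.withDensity d) (m.withDensity d) := by
    simpa only [withDensity_congr_ae hdT] using measurePreserving_withDensity_comp hT hd
  exact ⟨(m.withDensity d Set.univ)⁻¹ • m.withDensity d, inferInstance,
    (withDensity_absolutelyContinuous m d).smul_left _, hpres.smul_measure _⟩

end InvariantDensity

section Flow

variable {X : Type*} [MeasurableSpace X] {φ : ℝ → X → X}

/-- A measurable flow, i.e. a jointly measurable action of `ℝ`. -/
structure IsMeasurableFlow (φ : ℝ → X → X) : Prop where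
  measurable_uncurry : Measurable fun p : ℝ × X => φ p.1 p.2
  map_zero : φ 0 = id
  map_add : ∀ s t : ℝ, φ (t + s) = φ t ∘ φ s

/-- An ergodic invariant probability measure of a flow. Ergodicity is phrased through the invariant
probability measures absolutely continuous with respect to `μ`, which is equivalent to every
measurable set invariant up to null sets having measure `0` or `1`. -/
structure IsErgodicMeasure (φ : ℝ → X → X) (μ : Measure X) : Prop where
  isProbabilityMeasure : IsProbabilityMeasure μ
  measurePreserving : ∀ t, MeasurePreserving (φ t) μ μ
  eq_of_absolutelyContinuous : ∀ ν : Measure X, IsProbabilityMeasure ν → ν ≪ μ →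
    (∀ t, MeasurePreserving (φ t) ν ν) → ν = μ

namespace IsMeasurableFlow

lemma measurable (hφ : IsMeasurableFlow φ) (t : ℝ) : Measurable (φ t) :=
  hφ.measurable_uncurry.comp measurable_prodMk_left

lemma leftInverse_neg (hφ : IsMeasurableFlow φ) (t : ℝ) : Function.LeftInverse (φ (-t)) (φ t) :=
  fun x => by simpa [hφ.map_zero] using (congrFun (hφ.map_add t (-t)) x).symm

lemma iterate (hφ : IsMeasurableFlow φ) (t : ℝ) (n : ℕ) : (φ t)^[n] = φ (n * t) := by
  induction n with
  | zero => simp [hφ.map_zero]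
  | succ n ih => rw [Function.iterate_succ, ih, ← hφ.map_add]; push_cast; ring_nf

/-- The time-`t` map of a measurable flow as a measurable equivalence. -/
def measurableEquiv (hφ : IsMeasurableFlow φ) (t : ℝ) : X ≃ᵐ X where
  toFun := φ t
  invFun := φ (-t)
  left_inv := hφ.leftInverse_neg t
  right_inv x := by simpa using hφ.leftInverse_neg (-t) x
  measurable_toFun := hφ.measurable t
  measurable_invFun := hφ.measurable (-t)

end IsMeasurableFlow

lemma isMeasurableFlow_of_continuous {X : Type*} [TopologicalSpace X] [MeasurableSpace X]
    [BorelSpace X] {φ : ℝ → X → X} (hφc : Continuous fun p : ℝ × X => φ p.1 p.2)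
    (hφ0 : φ 0 = id) (hφadd : ∀ s t : ℝ, φ (t + s) = φ t ∘ φ s) : IsMeasurableFlow φ :=
  ⟨hφc.measurable, hφ0, hφadd⟩

end Flow

section TimeAverage

variable {X : Type*} [MeasurableSpace X] {φ : ℝ → X → X}

lemma setLIntegral_Ioc_eq_of_periodic {q : ℝ → ENNReal} {T : ℝ} (hq : Function.Periodic q T)
    (hT : 0 < T) (s t : ℝ) :
    ∫⁻ x in Set.Ioc s (s + T), q x = ∫⁻ x in Set.Ioc t (t + T), q x := by
  refine (isAddFundamentalDomain_Ioc hT s volume).setLIntegral_eq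
    (isAddFundamentalDomain_Ioc hT t volume) q ?_
  rintro ⟨_, n, rfl⟩ x
  rw [← hq.zsmul n x, add_comm]
  rfl

/-- The average `∫₀¹ (φ_s)_* ν ds` of a measure along a flow; it turns a measure invariant under
the time-one map into one invariant under the flow. -/
noncomputable def timeAverage (φ : ℝ → X → X) (ν : Measure X) : Measure X :=
  ((volume.restrict (Set.Ioc (0 : ℝ) 1)).prod ν).map fun p => φ p.1 p.2

lemma timeAverage_apply (hφ : IsMeasurableFlow φ) (ν : Measure X) [SFinite ν] {A : Set X}
    (hA : MeasurableSet A) :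
    timeAverage φ ν A = ∫⁻ s in Set.Ioc (0 : ℝ) 1, ν (φ s ⁻¹' A) := by
  rw [timeAverage, Measure.map_apply hφ.measurable_uncurry hA,
    Measure.prod_apply (hφ.measurable_uncurry hA)]
  rfl

lemma isProbabilityMeasure_timeAverage (hφ : IsMeasurableFlow φ) (ν : Measure X)
    [IsProbabilityMeasure ν] : IsProbabilityMeasure (timeAverage φ ν) :=
  ⟨by simp [timeAverage_apply hφ]⟩

lemma timeAverage_absolutelyContinuous (hφ : IsMeasurableFlow φ) {ν m : Measure X} [SFinite ν]
    (hm : ∀ t, MeasurePreserving (φ t) m m) (hν : ν ≪ m) : timeAverage φ ν ≪ m := by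
  refine Measure.AbsolutelyContinuous.mk fun A hA hA0 => ?_
  have hnull (s : ℝ) : ν (φ s ⁻¹' A) = 0 :=
    hν (by rwa [(hm s).measure_preimage hA.nullMeasurableSet])
  simp [timeAverage_apply hφ ν hA, hnull]

lemma measurePreserving_timeAverage (hφ : IsMeasurableFlow φ) {ν : Measure X} [SFinite ν]
    (hν : MeasurePreserving (φ 1) ν ν) (t : ℝ) :
    MeasurePreserving (φ t) (timeAverage φ ν) (timeAverage φ ν) := by
  refine ⟨hφ.measurable t, Measure.ext fun A hA => ?_⟩
  let q : ℝ → ENNReal := fun s => ν (φ s ⁻¹' A)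
  have hq : Function.Periodic q 1 := fun s => by
    simp only [q, hφ.map_add 1 s, Set.preimage_comp,
      hν.measure_preimage (hφ.measurable s hA).nullMeasurableSet]
  have hshift (s : ℝ) : ν (φ s ⁻¹' (φ t ⁻¹' A)) = q (s + t) := by
    rw [← Set.preimage_comp, ← hφ.map_add, add_comm]
  rw [Measure.map_apply (hφ.measurable t) hA, timeAverage_apply hφ ν hA,
    timeAverage_apply hφ ν (hφ.measurable t hA)]
  calc ∫⁻ s in Set.Ioc 0 1, ν (φ s ⁻¹' (φ t ⁻¹' A))
      = ∫⁻ s in Set.Ioc (0 : ℝ) 1, q (s + t) := by simp only [hshift]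
    _ = ∫⁻ s in Set.Ioc t (t + 1), q s := by
        rw [(measurePreserving_add_right volume t).setLIntegral_comp_emb
          (measurableEmbedding_addRight t) q, Set.image_add_const_Ioc, zero_add, add_comm]
    _ = ∫⁻ s in Set.Ioc 0 1, q s := by
        simpa only [zero_add] using setLIntegral_Ioc_eq_of_periodic hq one_pos t 0

end TimeAverage

section LowerMedian

open ProbabilityTheory
open scoped Topology

/-- The smallest median of a probability measure on the line: a choice of a real number that depends
measurably on the measure and commutes with translations, without any moment assumption. -/
noncomputable def lowerMedian (ν : Measure ℝ) : ℝ := sInf {s | 1 / 2 ≤ cdf ν s}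

lemma nonempty_setOf_half_le_cdf (ν : Measure ℝ) : {s | 1 / 2 ≤ cdf ν s}.Nonempty :=
  ((tendsto_cdf_atTop ν).eventually (eventually_ge_nhds (by norm_num))).exists

lemma bddBelow_setOf_half_le_cdf (ν : Measure ℝ) : BddBelow {s | 1 / 2 ≤ cdf ν s} := by
  obtain ⟨b, hb⟩ := ((tendsto_cdf_atBot ν).eventually
    (eventually_lt_nhds (show (0 : ℝ) < 1 / 2 by norm_num))).exists
  exact ⟨b, fun s hs => ((monotone_cdf ν).reflect_lt (hb.trans_le hs)).le⟩

lemma lowerMedian_le_iff {ν : Measure ℝ} {a : ℝ} : lowerMedian ν ≤ a ↔ 1 / 2 ≤ cdf ν a := by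
  refine ⟨fun h => ?_, csInf_le (bddBelow_setOf_half_le_cdf ν)⟩
  have hright : Tendsto (cdf ν) (𝓝[>] a) (𝓝 (cdf ν a)) :=
    ((cdf ν).right_continuous a).mono_left (nhdsWithin_mono a Set.Ioi_subset_Ici_self)
  refine ge_of_tendsto hright (eventually_mem_nhdsWithin.mono fun b hb => ?_)
  obtain ⟨s, hs, hsb⟩ := exists_lt_of_csInf_lt (nonempty_setOf_half_le_cdf ν) (h.trans_lt hb)
  exact hs.trans (monotone_cdf ν hsb.le)

lemma lowerMedian_map_add_const (ν : Measure ℝ) [IsProbabilityMeasure ν] (c : ℝ) :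
    lowerMedian (ν.map (· + c)) = lowerMedian ν + c := by
  have : IsProbabilityMeasure (ν.map (· + c)) :=
    Measure.isProbabilityMeasure_map (measurable_add_const c).aemeasurable
  refine eq_of_forall_ge_iff fun a => ?_
  rw [← le_sub_iff_add_le, lowerMedian_le_iff, lowerMedian_le_iff, cdf_eq_real, cdf_eq_real,
    map_measureReal_apply (measurable_add_const c) measurableSet_Iic, Set.preimage_add_const_Iic]

lemma measurable_lowerMedian_kernel {X : Type*} [MeasurableSpace X] (κ : Kernel X ℝ)
    [IsMarkovKernel κ] : Measurable fun x => lowerMedian (κ x) := by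
  refine measurable_of_Iic fun a => ?_
  simp only [Set.preimage, Set.mem_Iic, lowerMedian_le_iff, cdf_eq_real]
  exact measurableSet_le measurable_const (κ.measurable_coe measurableSet_Iic).ennreal_toReal

end LowerMedian

section Cocycle

variable {X : Type*} [MeasurableSpace X] {φ : ℝ → X → X} {F : ℝ → X → ℝ}

/-- A measurable real-valued additive cocycle over a flow, such as the Birkhoff integrals of a
function. -/
structure IsMeasurableCocycle (φ : ℝ → X → X) (F : ℝ → X → ℝ) : Prop where
  measurable_uncurry : Measurable fun p : ℝ × X => F p.1 p.2
  map_add : ∀ s t x, F (t + s) x = F s x + F t (φ s x)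

/-- A cocycle is a measurable coboundary if it is a.e. the difference of a measurable transfer
function along the orbits; the exceptional null set may depend on the time. -/
def IsCoboundary (φ : ℝ → X → X) (F : ℝ → X → ℝ) (μ : Measure X) : Prop :=
  ∃ u : X → ℝ, Measurable u ∧ ∀ t : ℝ, ∀ᵐ x ∂μ, F t x = u (φ t x) - u x

/-- The skew product over a flow `φ` by which a cocycle `F` translates the real fibres. -/
def skewProduct (φ : ℝ → X → X) (F : ℝ → X → ℝ) (t : ℝ) (p : X × ℝ) : X × ℝ :=
  (φ t p.1, p.2 + F t p.1)

namespace IsMeasurableCocycle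

lemma measurable (hF : IsMeasurableCocycle φ F) (t : ℝ) : Measurable (F t) :=
  hF.measurable_uncurry.comp measurable_prodMk_left

lemma map_zero (hF : IsMeasurableCocycle φ F) (hφ : IsMeasurableFlow φ) (x : X) : F 0 x = 0 := by
  simpa [hφ.map_zero] using hF.map_add 0 0 x

end IsMeasurableCocycle

lemma isMeasurableCocycle_intervalIntegral {X : Type*} [TopologicalSpace X] [MeasurableSpace X]
    [OpensMeasurableSpace X] {φ : ℝ → X → X} (hφc : Continuous fun p : ℝ × X => φ p.1 p.2)
    (hφadd : ∀ s t : ℝ, φ (t + s) = φ t ∘ φ s) {f : X → ℝ} (hf : Continuous f) :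
    IsMeasurableCocycle φ fun t x => ∫ τ in (0 : ℝ)..t, f (φ τ x) where
  measurable_uncurry := by
    have hcont : Continuous fun p : ℝ × X => ∫ τ in (0 : ℝ)..p.1, f (φ τ p.2) :=
      intervalIntegral.continuous_parametric_intervalIntegral_of_continuous
        (f := fun (p : ℝ × X) τ => f (φ τ p.2))
        (hf.comp (hφc.comp (by fun_prop : Continuous fun q : (ℝ × X) × ℝ => (q.2, q.1.2))))
        continuous_fst
    exact hcont.measurable
  map_add s t x := by
    have hint (a b : ℝ) : IntervalIntegrable (fun τ => f (φ τ x)) volume a b :=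
      (hf.comp (hφc.comp (Continuous.prodMk_left x))).intervalIntegrable a b
    have hshift (τ : ℝ) : f (φ τ (φ s x)) = f (φ (τ + s) x) := by rw [hφadd, Function.comp_apply]
    simp only [hshift]
    rw [intervalIntegral.integral_comp_add_right (fun τ => f (φ τ x)), zero_add,
      intervalIntegral.integral_add_adjacent_intervals (hint _ _) (hint _ _)]

lemma isMeasurableFlow_skewProduct (hφ : IsMeasurableFlow φ) (hF : IsMeasurableCocycle φ F) :
    IsMeasurableFlow (skewProduct φ F) where
  measurable_uncurry := by
    have hbase : Measurable fun p : ℝ × (X × ℝ) => (p.1, p.2.1) := by fun_prop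
    exact (hφ.measurable_uncurry.comp hbase).prodMk
      (measurable_snd.snd.add (hF.measurable_uncurry.comp hbase))
  map_zero := by
    ext p <;> simp [skewProduct, hφ.map_zero, hF.map_zero hφ]
  map_add s t := by
    ext p <;> simp [skewProduct, hφ.map_add, hF.map_add, add_assoc]

lemma measurePreserving_skewProduct (hF : IsMeasurableCocycle φ F) {μ : Measure X} [SFinite μ]
    {t : ℝ} (hμ : MeasurePreserving (φ t) μ μ) :
    MeasurePreserving (skewProduct φ F t) (μ.prod volume) (μ.prod volume) :=
  hμ.skew_product (g := fun x s => s + F t x)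
    (measurable_snd.add ((hF.measurable t).comp measurable_fst))
    (ae_of_all _ fun x => (measurePreserving_add_right volume (F t x)).map_eq)

end Cocycle

section TransferFunction

open ProbabilityTheory

variable {X : Type*} [MeasurableSpace X] {φ : ℝ → X → X} {F : ℝ → X → ℝ}

lemma measurePreserving_fst_of_semiconj {Ω : Type*} [MeasurableSpace Ω] {ρ : Measure (X × Ω)}
    {f : X → X} {S : X × Ω → X × Ω} (hf : Measurable f) (hS : MeasurePreserving S ρ ρ)
    (hfst : Function.Semiconj Prod.fst S f) : MeasurePreserving f ρ.fst ρ.fst :=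
  MeasurePreserving.of_semiconj ⟨measurable_fst, rfl⟩ hS hfst hf

lemma condKernel_apply_equiv_ae_eq_map {Ω : Type*} [MeasurableSpace Ω] [StandardBorelSpace Ω]
    [Nonempty Ω] {ρ : Measure (X × Ω)} [IsFiniteMeasure ρ] (e : X ≃ᵐ X) {g : X → Ω → Ω}
    (hg : Measurable (Function.uncurry g))
    (hρ : MeasurePreserving (fun p : X × Ω => (e p.1, g p.1 p.2)) ρ ρ) :
    ∀ᵐ x ∂ρ.fst, ρ.condKernel (e x) = (ρ.condKernel x).map (g x) := by
  let η : Kernel X Ω :=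
    ((Kernel.id ×ₖ ρ.condKernel).map (Function.uncurry g)).comap e.symm e.symm.measurable
  have : IsMarkovKernel ((Kernel.id ×ₖ ρ.condKernel).map (Function.uncurry g)) :=
    Kernel.IsMarkovKernel.map _ hg
  have hη (x : X) : η (e x) = (ρ.condKernel x).map (g x) := by
    rw [Kernel.comap_apply, e.symm_apply_apply, Kernel.map_apply _ hg, Kernel.prod_apply,
      Kernel.id_apply, Measure.dirac_prod, Measure.map_map hg measurable_prodMk_left]
    rfl
  have hbase : MeasurePreserving e ρ.fst ρ.fst :=
    measurePreserving_fst_of_semiconj e.measurable hρ fun _ => rfl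
  have hdis : ρ = ρ.fst ⊗ₘ η := by
    refine Measure.ext_prod fun {A B} hA hB => ?_
    have hAB : MeasurableSet (A ×ˢ B) := hA.prod hB
    rw [← hρ.measure_preimage hAB.nullMeasurableSet, Measure.compProd_apply hAB,
      ← hbase.lintegral_comp (Kernel.measurable_kernel_prodMk_left hAB)]
    conv_lhs => rw [← ρ.disintegrate ρ.condKernel]
    rw [Measure.compProd_apply (hρ.measurable hAB)]
    refine lintegral_congr fun x => ?_
    rw [hη, Measure.map_apply hg.of_uncurry_left (measurable_prodMk_left hAB)]
    rfl
  filter_upwards [hbase.quasiMeasurePreserving.ae (eq_condKernel_of_measure_eq_compProd η hdis)]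
    with x hx
  rw [← hx, hη]

lemma isCoboundary_fst_of_measurePreserving_skewProduct (hφ : IsMeasurableFlow φ)
    (hF : IsMeasurableCocycle φ F) {ρ : Measure (X × ℝ)} [IsFiniteMeasure ρ]
    (hρ : ∀ t, MeasurePreserving (skewProduct φ F t) ρ ρ) : IsCoboundary φ F ρ.fst := by
  refine ⟨fun x => lowerMedian (ρ.condKernel x), measurable_lowerMedian_kernel _, fun t => ?_⟩
  filter_upwards [condKernel_apply_equiv_ae_eq_map (hφ.measurableEquiv t)
    (g := fun x s => s + F t x) (measurable_snd.add ((hF.measurable t).comp measurable_fst))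
    (hρ t)] with x hx
  change ρ.condKernel (φ t x) = _ at hx
  rw [hx, lowerMedian_map_add_const, add_sub_cancel_left]

lemma isCoboundary_of_compMeasurePreserving_eq (hφ : IsMeasurableFlow φ)
    (hF : IsMeasurableCocycle φ F) {μ : Measure X} (hμ : IsErgodicMeasure φ μ)
    (hΦ : MeasurePreserving (skewProduct φ F 1) (μ.prod volume) (μ.prod volume))
    {h : Lp ℝ 2 (μ.prod (volume : Measure ℝ))} (hne : h ≠ 0)
    (hinv : Lp.compMeasurePreserving (skewProduct φ F 1) hΦ h = h) : IsCoboundary φ F μ := by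
  have := hμ.isProbabilityMeasure
  have hflow := isMeasurableFlow_skewProduct hφ hF
  obtain ⟨ν, _, hνac, hν⟩ := exists_isProbabilityMeasure_absolutelyContinuous_measurePreserving
    hΦ two_ne_zero ENNReal.ofNat_ne_top hne hinv
  let ρ := timeAverage (skewProduct φ F) ν
  have : IsProbabilityMeasure ρ := isProbabilityMeasure_timeAverage hflow ν
  have hρ (t : ℝ) : MeasurePreserving (skewProduct φ F t) ρ ρ :=
    measurePreserving_timeAverage hflow hν t
  have hρac : ρ ≪ μ.prod volume := timeAverage_absolutelyContinuous hflow
    (fun t => measurePreserving_skewProduct hF (hμ.measurePreserving t)) hνac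
  have hfst : ρ.fst = μ := hμ.eq_of_absolutelyContinuous ρ.fst inferInstance
    ((hρac.map measurable_fst).trans Measure.quasiMeasurePreserving_fst.absolutelyContinuous)
    fun t => measurePreserving_fst_of_semiconj (hφ.measurable t) (hρ t) fun _ => rfl
  exact hfst ▸ isCoboundary_fst_of_measurePreserving_skewProduct hφ hF hρ

end TransferFunction

section Growth

variable {X : Type*} [MeasurableSpace X] {φ : ℝ → X → X} {F : ℝ → X → ℝ}

lemma measure_abs_lt_le_measure_skewProduct_preimage_inter (μ : Measure X) (C t : ℝ) :
    μ {x | |F t x| < C} ≤ (μ.prod volume) (skewProduct φ F t ⁻¹' (Set.univ ×ˢ Set.Icc (-C) (C + 1))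
      ∩ Set.univ ×ˢ Set.Icc 0 1) := by
  have hsub : {x | |F t x| < C} ×ˢ Set.Icc (0 : ℝ) 1 ⊆
      skewProduct φ F t ⁻¹' (Set.univ ×ˢ Set.Icc (-C) (C + 1)) ∩ Set.univ ×ˢ Set.Icc 0 1 := by
    rintro ⟨x, s⟩ ⟨hx, hs⟩
    obtain ⟨hlo, hhi⟩ := abs_lt.1 (show |F t x| < C from hx)
    refine ⟨⟨trivial, ?_, ?_⟩, trivial, hs⟩ <;> dsimp only [skewProduct] <;> linarith [hs.1, hs.2]
  simpa [Measure.prod_prod] using measure_mono (μ := μ.prod (volume : Measure ℝ)) hsub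

theorem growth_along_arithmetic_progressions_general (hφ : IsMeasurableFlow φ)
    (hF : IsMeasurableCocycle φ F) {μ : Measure X} (hμ : IsErgodicMeasure φ μ)
    (hnc : ¬ IsCoboundary φ F μ) (C : ℝ) {ε : ℝ} (hε : 0 < ε) (ℓ : ℕ) :
    ∃ t₀ : ℝ, 0 < t₀ ∧ ∀ i : ℕ, 1 ≤ i → i ≤ ℓ →
      μ {x | |F ((i : ℝ) * t₀) x| < C} < ENNReal.ofReal ε := by
  have := hμ.isProbabilityMeasure
  have hΦ := measurePreserving_skewProduct hF (hμ.measurePreserving 1)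
  have hfix (h : Lp ℝ 2 (μ.prod (volume : Measure ℝ)))
      (hh : Lp.compMeasurePreserving (skewProduct φ F 1) hΦ h = h) : h = 0 := by
    by_contra hne
    exact hnc (isCoboundary_of_compMeasurePreserving_eq hφ hF hμ hΦ hne hh)
  have hbox (a b : ℝ) : (μ.prod volume) (Set.univ ×ˢ Set.Icc a b) ≠ ⊤ := by
    simp [Measure.prod_prod]
  obtain ⟨n, hn, hsmall⟩ := exists_pos_forall_mul_lt_of_tendsto_average_zero
    (fun _ => measureReal_nonneg) (tendsto_average_measureReal_preimage_inter hΦ hfix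
      (MeasurableSet.univ.prod measurableSet_Icc) (hbox (-C) (C + 1))
      (MeasurableSet.univ.prod measurableSet_Icc) (hbox 0 1)) hε ℓ
  refine ⟨n, by exact_mod_cast hn, fun i hi hil => ?_⟩
  have hlt := hsmall i hi hil
  rw [(isMeasurableFlow_skewProduct hφ hF).iterate, mul_one, Nat.cast_mul] at hlt
  exact (measure_abs_lt_le_measure_skewProduct_preimage_inter μ C _).trans_lt
    ((ENNReal.lt_ofReal_iff_toReal_lt
      (measure_ne_top_of_subset Set.inter_subset_right (hbox 0 1))).2 hlt)

end Growth

/-- **Growth along arithmetic progressions.**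
Let `φ` be a continuous flow on a compact metric space `M`, uniquely ergodic with
invariant Borel probability measure `μ`.  Let `f : M → ℝ` be continuous with Birkhoff
integrals `F t x = ∫₀^t f(φ_τ x) dτ`, and assume `f` is not a measurable coboundary
for `φ`.  Then for every `C > 1`, `ε > 0` and integer `ℓ ≥ 1` there exists `t₀ > 0`
such that `μ{|F_{i t₀}| < C} < ε` for all `i = 1, …, ℓ`. -/
theorem growth_along_arithmetic_progressions
    {M : Type*} [MetricSpace M] [CompactSpace M] [MeasurableSpace M] [BorelSpace M]
    (φ : ℝ → M → M) (hφc : Continuous fun p : ℝ × M => φ p.1 p.2)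
    (hφ0 : φ 0 = id) (hφadd : ∀ s t : ℝ, φ (t + s) = φ t ∘ φ s)
    (μ : Measure M) [IsProbabilityMeasure μ]
    (hinv : ∀ t : ℝ, MeasurePreserving (φ t) μ μ)
    (huniq : ∀ ν : Measure M, IsProbabilityMeasure ν →
      (∀ t : ℝ, MeasurePreserving (φ t) ν ν) → ν = μ)
    (f : M → ℝ) (hf : Continuous f)
    (F : ℝ → M → ℝ) (hF : ∀ (t : ℝ) (x : M), F t x = ∫ τ in (0:ℝ)..t, f (φ τ x))
    (hnc : ¬ ∃ u : M → ℝ, Measurable u ∧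
      ∀ t : ℝ, ∀ᵐ x ∂μ, F t x = u (φ t x) - u x)
    (C : ℝ) (hC : 1 < C) :
    ∀ ε > (0:ℝ), ∀ ℓ : ℕ, 1 ≤ ℓ → ∃ t₀ : ℝ, 0 < t₀ ∧
      ∀ i : ℕ, 1 ≤ i → i ≤ ℓ →
        μ {x : M | |F ((i : ℝ) * t₀) x| < C} < ENNReal.ofReal ε := by
  obtain rfl : F = fun t x => ∫ τ in (0 : ℝ)..t, f (φ τ x) := funext₂ hF
  exact fun ε hε ℓ _ => growth_along_arithmetic_progressions_general
    (isMeasurableFlow_of_continuous hφc hφ0 hφadd)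
    (isMeasurableCocycle_intervalIntegral hφc hφadd hf)
    ⟨inferInstance, hinv, fun ν hν _ hνinv => huniq ν hν hνinv⟩ hnc C hε ℓ
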